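/- arXiv:2005.01225 — 3 statements merged into one kernel-verified Lean document; each statement's English description precedes it below -/
import Mathlib

section
/- For every z ∈ ℂ^m with z ≠ 0, the stabilizer of z in D_{2p} has order at most 2; moreover it has order exactly 2 if and only if there exists g ∈ D_{2p} such that all coordinates of g·z are real. (In particular, every point of ℂ^m ∖ {0} has isotropy group either trivial or conjugate to the order-2 subgroup ⟨τ⟩.) -/
noncomputable section

/-- The `ℝ`-linear action of `D_{2p}` on `ℂ^m`, where `ζ` acts as coordinatewise
multiplication by `ω = exp(2πi·i/p)` and `τ` acts as coordinatewise complex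
conjugation (so the reflection `sr a = ζ^a τ ⋯` acts by `z ↦ conj(ω^a z)`). -/
def dihedralAct (p i m : ℕ) : DihedralGroup p → (Fin m → ℂ) → (Fin m → ℂ)
  | .r a, z => fun t => Complex.exp (2 * Real.pi * Complex.I * i / p) ^ a.val * z t
  | .sr a, z => fun t =>
      (starRingEnd ℂ) (Complex.exp (2 * Real.pi * Complex.I * i / p) ^ a.val * z t)

/-- For every `z ∈ ℂ^m` with `z ≠ 0`, the stabilizer of `z` in `D_{2p}` has
order at most 2, and it has order exactly 2 if and only if there is a `g ∈ D_{2p}` such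
that all coordinates of `g·z` are real. -/
theorem dihedral_stabilizer_of_nonzero
    (p : ℕ) (hp : p.Prime) (hodd : Odd p) (i : ℕ) (hi1 : 1 ≤ i) (hi2 : i ≤ p - 1)
    (m : ℕ) (hm : 1 ≤ m) :
    ∀ z : Fin m → ℂ, z ≠ 0 →
      Nat.card {g : DihedralGroup p // dihedralAct p i m g z = z} ≤ 2 ∧
      (Nat.card {g : DihedralGroup p // dihedralAct p i m g z = z} = 2 ↔
        ∃ g : DihedralGroup p, ∀ t : Fin m, (dihedralAct p i m g z t).im = 0) := by
  intro z hz
  have : Fact p.Prime := ⟨hp⟩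
  have : NeZero p := ⟨hp.ne_zero⟩
  have hprim : IsPrimitiveRoot (Complex.exp (2 * Real.pi * Complex.I * i / p)) p := by
    have h := Complex.isPrimitiveRoot_exp_of_coprime i p hp.ne_zero
      (Nat.coprime_of_lt_prime (by omega) (by have := hp.two_le; omega) hp).symm
    rwa [← mul_div_assoc] at h
  set ω := Complex.exp (2 * Real.pi * Complex.I * i / p) with hω
  have hWadd : ∀ a b : ZMod p, ω ^ (a + b).val = ω ^ a.val * ω ^ b.val := by
    intro a b
    rw [ZMod.val_add, ← pow_add]
    conv_rhs => rw [← Nat.mod_add_div (a.val + b.val) p, pow_add, pow_mul, hprim.pow_eq_one]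
    simp
  have hWinj : ∀ a b : ZMod p, ω ^ a.val = ω ^ b.val → a = b := by
    intro a b h
    exact ZMod.val_injective p (hprim.pow_inj (ZMod.val_lt a) (ZMod.val_lt b) h)
  have hconj : ∀ a : ZMod p, (starRingEnd ℂ) (ω ^ a.val) * ω ^ a.val = 1 := by
    intro a
    have : ‖ω ^ a.val‖ = 1 := by rw [norm_pow, hprim.norm'_eq_one hp.ne_zero, one_pow]
    rw [mul_comm, Complex.mul_conj, Complex.normSq_eq_norm_sq, this]
    simp
  obtain ⟨t₀, ht₀⟩ : ∃ t, z t ≠ 0 := by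
    by_contra! h
    exact hz (funext h)
  have hr : ∀ a : ZMod p, dihedralAct p i m (.r a) z = z ↔ a = 0 := by
    intro a
    constructor
    · intro h
      have h1 : ω ^ a.val * z t₀ = z t₀ := congrFun h t₀
      apply hWinj
      rw [ZMod.val_zero, pow_zero]
      exact mul_right_cancel₀ ht₀ (by rw [h1, one_mul])
    · rintro rfl
      funext t
      simp [dihedralAct]
  have hsr : ∀ a b : ZMod p, dihedralAct p i m (.sr a) z = z →
      dihedralAct p i m (.sr b) z = z → a = b := by
    intro a b ha hb
    have h1 : (starRingEnd ℂ) (ω ^ a.val * z t₀) = z t₀ := congrFun ha t₀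
    have h2 : (starRingEnd ℂ) (ω ^ b.val * z t₀) = z t₀ := congrFun hb t₀
    exact hWinj _ _ (mul_right_cancel₀ ht₀ ((starRingEnd ℂ).injective (h1.trans h2.symm)))
  have hreal : (∃ g : DihedralGroup p, ∀ t : Fin m, (dihedralAct p i m g z t).im = 0) ↔
      ∃ a : ZMod p, dihedralAct p i m (.sr a) z = z := by
    constructor
    · rintro ⟨g, hg⟩
      have : ∃ b : ZMod p, ∀ t, (starRingEnd ℂ) (ω ^ b.val * z t) = ω ^ b.val * z t := by
        cases g with
        | r b => exact ⟨b, fun t => Complex.conj_eq_iff_im.2 (hg t)⟩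
        | sr b =>
          refine ⟨b, fun t => Complex.conj_eq_iff_im.2 ?_⟩
          have h : ((starRingEnd ℂ) (ω ^ b.val * z t)).im = 0 := hg t
          rwa [Complex.conj_im, neg_eq_zero] at h
      obtain ⟨b, hb⟩ := this
      refine ⟨b + b, funext fun t => ?_⟩
      change (starRingEnd ℂ) (ω ^ (b + b).val * z t) = z t
      rw [hWadd, mul_assoc, map_mul, hb, ← mul_assoc, hconj, one_mul]
    · rintro ⟨a, ha⟩
      have h2 : (2 : ZMod p) ≠ 0 := by
        intro h
        have h' : ((2 : ℕ) : ZMod p) = 0 := by exact_mod_cast h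
        rw [ZMod.natCast_eq_zero_iff] at h'
        have := (Nat.prime_dvd_prime_iff_eq hp Nat.prime_two).1 h'
        subst this
        exact absurd hodd (by decide)
      obtain ⟨b, rfl⟩ : ∃ b : ZMod p, a = b + b := ⟨a / 2, by field_simp; ring⟩
      refine ⟨.r b, fun t => Complex.conj_eq_iff_im.1 ?_⟩
      change (starRingEnd ℂ) (ω ^ b.val * z t) = ω ^ b.val * z t
      have h : (starRingEnd ℂ) (ω ^ (b + b).val * z t) = z t := congrFun ha t
      rw [hWadd, mul_assoc, map_mul] at h
      calc _ = ((starRingEnd ℂ) (ω ^ b.val) * ω ^ b.val) *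
            (starRingEnd ℂ) (ω ^ b.val * z t) := by rw [hconj, one_mul]
        _ = ω ^ b.val * ((starRingEnd ℂ) (ω ^ b.val) *
            (starRingEnd ℂ) (ω ^ b.val * z t)) := by ring
        _ = _ := by rw [h]
  rw [hreal]
  by_cases hex : ∃ a : ZMod p, dihedralAct p i m (.sr a) z = z
  · obtain ⟨a, ha⟩ := hex
    have hset : {g : DihedralGroup p | dihedralAct p i m g z = z} = {.r 0, .sr a} := by
      ext g
      cases g with
      | r b => simp [hr, -DihedralGroup.r_zero]
      | sr b =>
        simp only [Set.mem_ofPred_eq, Set.mem_insert_iff, Set.mem_singleton_iff, reduceCtorEq,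
          false_or, DihedralGroup.sr.injEq]
        exact ⟨fun h => hsr _ _ h ha, fun h => h ▸ ha⟩
    have hcard : Nat.card {g : DihedralGroup p // dihedralAct p i m g z = z} = 2 := by
      change Set.ncard {g : DihedralGroup p | dihedralAct p i m g z = z} = 2
      rw [hset]
      exact Set.ncard_pair (by simp [-DihedralGroup.r_zero])
    exact ⟨hcard.le, fun _ => ⟨a, ha⟩, fun _ => hcard⟩
  · have hset : {g : DihedralGroup p | dihedralAct p i m g z = z} = {.r 0} := by
      ext g
      cases g with
      | r b => simp [hr, -DihedralGroup.r_zero]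
      | sr b =>
        simp only [Set.mem_ofPred_eq, Set.mem_singleton_iff, reduceCtorEq, iff_false]
        exact fun h => hex ⟨b, h⟩
    have hcard : Nat.card {g : DihedralGroup p // dihedralAct p i m g z = z} = 1 := by
      change Set.ncard {g : DihedralGroup p | dihedralAct p i m g z = z} = 1
      rw [hset]
      exact Set.ncard_singleton _
    refine ⟨by omega, fun h => by omega, fun h => absurd h hex⟩

end
end

section
/- For 1 ≤ k ≤ m let K_k = { z ∈ ℂ^m : z_t = 0 for all t > k, and z_k = r·e^{√−1·λ} for some real r ≥ 0 and some λ with 0 ≤ λ ≤ π/p }. Then every point of the unit sphere { z ∈ ℂ^m : |z| = 1 } lies in g·K_k for some g ∈ D_{2p} and some 1 ≤ k ≤ m; that is, the D_{2p}-translates of the closed top-dimensional cells K_k cover the unit sphere. -/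
noncomputable section

theorem omega_pow_surj (p : ℕ) (hp : p.Prime) (i : ℕ) (hi1 : 1 ≤ i) (hi2 : i ≤ p - 1) (n : ℤ) :
    ∃ a : ZMod p, Complex.exp (2 * Real.pi * Complex.I * i / p) ^ a.val
      = Complex.exp ((2 * Real.pi * n / p : ℝ) * Complex.I) := by
  haveI : Fact p.Prime := ⟨hp⟩
  have hp0 : (p : ℂ) ≠ 0 := by exact_mod_cast hp.ne_zero
  have hi : (i : ZMod p) ≠ 0 := by
    intro h
    rw [ZMod.natCast_eq_zero_iff] at h
    have := Nat.le_of_dvd (by omega) h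
    have := hp.pos
    omega
  refine ⟨(n : ZMod p) * (i : ZMod p)⁻¹, ?_⟩
  set a : ZMod p := (n : ZMod p) * (i : ZMod p)⁻¹ with ha
  have h1 : (((i * a.val : ℕ) : ℤ) : ZMod p) = (n : ZMod p) := by
    push_cast
    rw [ZMod.natCast_zmod_val, ha]
    field_simp
  rw [ZMod.intCast_eq_intCast_iff_dvd_sub] at h1
  obtain ⟨c, hc⟩ := h1
  have hc' : (n : ℂ) = i * a.val + p * c := by
    have : n = i * a.val + p * c := by push_cast at hc; linarith
    exact_mod_cast congrArg (fun x : ℤ => (x : ℂ)) this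
  rw [← Complex.exp_nat_mul, Complex.exp_eq_exp_iff_exists_int]
  refine ⟨-c, ?_⟩
  push_cast
  rw [hc']
  field_simp
  ring

/-- Every point of the unit sphere of `ℂ^m` lies in a `D_{2p}`-translate of
one of the closed top-dimensional cells
`K_k = {z : z_t = 0 for t > k, z_k = r·e^{iλ}, r ≥ 0, 0 ≤ λ ≤ π/p}`, `1 ≤ k ≤ m`
(coordinates indexed `1,…,m`, so the coordinate `z_k` is `z ⟨k-1⟩`). -/
theorem translated_cells_cover_sphere
    (p : ℕ) (hp : p.Prime) (hodd : Odd p) (i : ℕ) (hi1 : 1 ≤ i) (hi2 : i ≤ p - 1)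
    (m : ℕ) (hm : 1 ≤ m) :
    ∀ z : Fin m → ℂ, (∑ t, Complex.normSq (z t)) = 1 →
      ∃ (g : DihedralGroup p) (k : ℕ) (h1 : 1 ≤ k) (h2 : k ≤ m) (w : Fin m → ℂ),
        (∀ t : Fin m, k ≤ (t : ℕ) → w t = 0) ∧
        (∃ r lam : ℝ, 0 ≤ r ∧ 0 ≤ lam ∧ lam ≤ Real.pi / p ∧
          w ⟨k - 1, by omega⟩ = (r : ℂ) * Complex.exp (lam * Complex.I)) ∧
        z = dihedralAct p i m g w := by
  intro z hz
  have hp0 : (0 : ℝ) < p := by exact_mod_cast hp.pos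
  have hpi := Real.pi_pos
  have hne : (Finset.univ.filter fun t => z t ≠ 0).Nonempty := by
    by_contra h
    rw [Finset.not_nonempty_iff_eq_empty, Finset.filter_eq_empty_iff] at h
    have h0 : ∀ t, z t = 0 := fun t => by simpa using h (Finset.mem_univ t)
    simp [h0] at hz
  obtain ⟨s, hs⟩ := Finset.exists_max_image _ (fun t : Fin m => (t : ℕ)) hne
  have hz0 : ∀ t : Fin m, (s : ℕ) + 1 ≤ t → z t = 0 := by
    intro t ht
    by_contra h
    have := hs.2 t (by simpa using h)
    omega
  set θ := Complex.arg (z s) with hθ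
  set n : ℤ := round (θ * p / (2 * Real.pi)) with hn
  set φ : ℝ := θ - 2 * Real.pi * n / p with hφ
  have habs : |φ| ≤ Real.pi / p := by
    have h := abs_sub_round (θ * p / (2 * Real.pi))
    rw [← hn] at h
    have e : φ = (θ * p / (2 * Real.pi) - n) * (2 * Real.pi / p) := by
      rw [hφ]; field_simp
    rw [e, abs_mul, abs_of_pos (by positivity : 0 < 2 * Real.pi / p)]
    calc _ ≤ 1 / 2 * (2 * Real.pi / p) := by gcongr
      _ = _ := by ring
  have hzs : z s = (‖z s‖ : ℂ) * Complex.exp (θ * Complex.I) :=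
    (Complex.norm_mul_exp_arg_mul_I (z s)).symm
  rcases le_total 0 φ with h | h
  · obtain ⟨a, ha⟩ := omega_pow_surj p hp i hi1 hi2 n
    refine ⟨.r a, s + 1, by omega, by omega,
      fun t => Complex.exp (-((2 * Real.pi * n / p : ℝ) * Complex.I)) * z t, ?_, ?_, ?_⟩
    · intro t ht
      simp [hz0 t ht]
    · refine ⟨‖z s‖, φ, norm_nonneg _, h, (le_abs_self _).trans habs, ?_⟩
      change Complex.exp _ * z s = _
      rw [hzs, mul_left_comm, ← Complex.exp_add, ← hzs]
      congr 2
      rw [hφ]; push_cast; ring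
    · funext t
      simp only [dihedralAct]
      rw [ha, ← mul_assoc, ← Complex.exp_add, add_neg_cancel, Complex.exp_zero, one_mul]
  · obtain ⟨a, ha⟩ := omega_pow_surj p hp i hi1 hi2 (-n)
    refine ⟨.sr a, s + 1, by omega, by omega,
      fun t => Complex.exp (-((2 * Real.pi * (-n : ℤ) / p : ℝ) * Complex.I))
        * (starRingEnd ℂ) (z t), ?_, ?_, ?_⟩
    · intro t ht
      simp [hz0 t ht]
    · refine ⟨‖z s‖, -φ, norm_nonneg _, by linarith, (neg_le_abs _).trans habs, ?_⟩
      change Complex.exp _ * (starRingEnd ℂ) (z s) = _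
      have hc : (starRingEnd ℂ) (z s) = (‖z s‖ : ℂ) * Complex.exp (-(θ * Complex.I)) := by
        conv_lhs => rw [hzs]
        rw [map_mul, ← Complex.exp_conj, map_mul, Complex.conj_ofReal, Complex.conj_ofReal,
          Complex.conj_I, mul_neg]
      rw [hc, mul_left_comm, ← Complex.exp_add]
      congr 2
      rw [hφ]; push_cast; ring
    · funext t
      simp only [dihedralAct]
      rw [ha, ← mul_assoc, ← Complex.exp_add, add_neg_cancel, Complex.exp_zero, one_mul,
        Complex.conj_conj]

end
end

section
/- For every odd prime p, every integer j with 1 ≤ j ≤ p − 1, and every m ≥ 1, the ℤ[D_{2p}]-linear maps d of the dihedral cellular complex C(j)_* satisfy d ∘ d = 0; that is, the data above define a chain complex of ℤ[D_{2p}]-modules. -/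
open DihedralGroup Finsupp

noncomputable section

namespace DihedralCell

variable (p : ℕ)

/-- ζ, the rotation of order `p`. -/
def zeta : DihedralGroup p := .r 1

/-- τ, the reflection. -/
def tau : DihedralGroup p := .sr 0

/-- The order-2 subgroup ⟨τ⟩. -/
def Htau : Subgroup (DihedralGroup p) := Subgroup.zpowers (tau p)

/-- Left cosets of ⟨τ⟩. -/
abbrev Cos := DihedralGroup p ⧸ Htau p

/-- Cell names of the dihedral cellular structure on `S(mγ_j)`: `a0 k q`/`b0 k q` are the
cells `q·a_{k,0}`, `q·b_{k,0}` (indexed by cosets of ⟨τ⟩); `a k l g`, `b k l g` (`1 ≤ l ≤ k-1`)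
are the free cells `g·a_{k,l}`, `g·b_{k,l}`; `c k g` is `g·c_k`. -/
inductive CIdx : Type
  | a0 (k : ℕ) (q : Cos p)
  | b0 (k : ℕ) (q : Cos p)
  | a (k l : ℕ) (g : DihedralGroup p)
  | b (k l : ℕ) (g : DihedralGroup p)
  | c (k : ℕ) (g : DihedralGroup p)

variable {p}

/-- The dimension of a cell. -/
def degC : CIdx p → ℕ
  | .a0 k _ => k - 1
  | .b0 k _ => k - 1
  | .a k l _ => k + l - 1
  | .b k l _ => k + l - 1
  | .c k _ => 2 * k - 1

/-- Validity of a cell index (the junk-free cells), for the sphere `S(mγ)`. -/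
def validC (m : ℕ) : CIdx p → Prop
  | .a0 k _ => 1 ≤ k ∧ k ≤ m
  | .b0 k _ => 1 ≤ k ∧ k ≤ m
  | .a k l _ => 1 ≤ l ∧ l ≤ k - 1 ∧ k ≤ m
  | .b k l _ => 1 ≤ l ∧ l ≤ k - 1 ∧ k ≤ m
  | .c k _ => 1 ≤ k ∧ k ≤ m

/-- The action of the dihedral group on cells. -/
def actC (g' : DihedralGroup p) : CIdx p → CIdx p
  | .a0 k q => .a0 k (g' • q)
  | .b0 k q => .b0 k (g' • q)
  | .a k l g => .a k l (g' * g)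
  | .b k l g => .b k l (g' * g)
  | .c k g => .c k (g' * g)

variable (p)

/-- The total module of cellular chains (all degrees together). -/
abbrev ChC := CIdx p →₀ ℤ

/-- The `ℤ`-linear action of `D_{2p}` on chains. -/
def rhoC (g : DihedralGroup p) : ChC p →ₗ[ℤ] ChC p :=
  Finsupp.lmapDomain ℤ ℤ (actC g)

/-- The submodule of chains of degree `n` (the degree-`n` term of the complex `C(j)`). -/
def Csub (m n : ℕ) : Submodule ℤ (ChC p) :=
  Finsupp.supported ℤ ℤ {i | validC m i ∧ degC i = n}

/-- The boundary of a single cell, following Lemma 2.2 of the paper (for the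
representation `γ_j`, i.e. with `ζ_i = ζ^j`). -/
def bndC (j : ℕ) : CIdx p → ChC p
  | .a0 k q => if k ≤ 1 then 0 else single (.a0 (k-1) q) 1 - single (.b0 (k-1) q) 1
  | .b0 k q => if k ≤ 1 then 0 else single (.a0 (k-1) q) 1 - single (.b0 (k-1) q) 1
  | .c k g =>
      if k ≤ 1 then
        (single (.b0 1 (↑(g * zeta p ^ (j * ((p+1)/2))))) 1 : ChC p) - single (.a0 1 ↑g) 1
      else
        single (.a k (k-1) g) (-1) + single (.a k (k-1) (g * tau p)) ((-1)^k)
        + single (.b k (k-1) (g * zeta p ^ (j * ((p+1)/2)))) 1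
        + single (.b k (k-1) (g * zeta p ^ (j * ((p+1)/2)) * tau p)) ((-1)^(k-1))
  | .a k l g =>
      if l = 0 then 0
      else if l = k - 1 then
        (if k = 2 then (single (.a0 k (↑g : Cos p)) (-1) : ChC p)
         else single (.a k (k-2) g) (-1) + single (.a k (k-2) (g * tau p)) ((-1)^(k-1)))
        + single (.c (k-1) g) (-1)
        - ∑ t ∈ Finset.range ((p-1)/2), single (.c (k-1) (g * zeta p ^ (j * (t+1)))) 1
        + ∑ t ∈ Finset.range ((p-1)/2),
            single (.c (k-1) (g * zeta p ^ (j * (t+1)) * tau p)) ((-1)^(k-2))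
      else if l = 1 then
        single (.a (k-1) 1 g) 1 - single (.b (k-1) 1 g) 1 + single (.a0 k (↑g : Cos p)) ((-1)^(k-1))
      else
        single (.a (k-1) l g) 1 - single (.b (k-1) l g) 1
        + single (.a k (l-1) g) ((-1)^(k-l)) + single (.a k (l-1) (g * tau p)) ((-1)^(k-1))
  | .b k l g =>
      if l = 0 then 0
      else if l = k - 1 then
        (if k = 2 then (single (.b0 k (↑g : Cos p)) (-1) : ChC p)
         else single (.b k (k-2) g) (-1) + single (.b k (k-2) (g * tau p)) ((-1)^(k-1)))
        + single (.c (k-1) g) (-1)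
        - ∑ t ∈ Finset.range ((p-1)/2), single (.c (k-1) (g * zeta p ^ (j * (t+1)))) 1
        + ∑ t ∈ Finset.range ((p-1)/2),
            single (.c (k-1) (g * zeta p ^ (j * (t+1)) * tau p)) ((-1)^(k-2))
      else if l = 1 then
        single (.a (k-1) 1 g) 1 - single (.b (k-1) 1 g) 1 + single (.b0 k (↑g : Cos p)) ((-1)^(k-1))
      else
        single (.a (k-1) l g) 1 - single (.b (k-1) l g) 1
        + single (.b k (l-1) g) ((-1)^(k-l)) + single (.b k (l-1) (g * tau p)) ((-1)^(k-1))

/-- The differential of the dihedral cellular complex `C(j)`. -/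
def DC (j : ℕ) : ChC p →ₗ[ℤ] ChC p :=
  Finsupp.lift (ChC p) ℤ (CIdx p) (bndC p j)

/-- The submodule of `D_{2p}`-invariant chains of degree `n`. -/
def InvC (m n : ℕ) : Submodule ℤ (ChC p) :=
  Csub p m n ⊓ (⨅ g : DihedralGroup p, LinearMap.ker (rhoC p g - LinearMap.id))

/-- Cycles of degree `n` of the underlying complex of abelian groups. -/
def ZcC (m j n : ℕ) : Submodule ℤ (ChC p) := Csub p m n ⊓ LinearMap.ker (DC p j)

/-- Degree-`n` homology of the underlying complex of abelian groups of `C(j)`. -/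
def HcC (m j n : ℕ) : Type :=
  ↥(ZcC p m j n) ⧸ Submodule.comap (ZcC p m j n).subtype
    (Submodule.map (DC p j) (Csub p m (n+1)))

instance (m j n : ℕ) : AddCommGroup (HcC p m j n) :=
  inferInstanceAs (AddCommGroup (↥(ZcC p m j n) ⧸ Submodule.comap (ZcC p m j n).subtype
    (Submodule.map (DC p j) (Csub p m (n+1)))))

instance (m j n : ℕ) : Module ℤ (HcC p m j n) :=
  inferInstanceAs (Module ℤ (↥(ZcC p m j n) ⧸ Submodule.comap (ZcC p m j n).subtype
    (Submodule.map (DC p j) (Csub p m (n+1)))))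

/-- Cycles of degree `n` of the complex of `D_{2p}`-invariants `(C(j))^{D_{2p}}`. -/
def ZinvC (m j n : ℕ) : Submodule ℤ (ChC p) := InvC p m n ⊓ LinearMap.ker (DC p j)

/-- Degree-`n` homology of the complex of `D_{2p}`-invariants of `C(j)`. -/
def HinvC (m j n : ℕ) : Type :=
  ↥(ZinvC p m j n) ⧸ Submodule.comap (ZinvC p m j n).subtype
    (Submodule.map (DC p j) (InvC p m (n+1)))

instance (m j n : ℕ) : AddCommGroup (HinvC p m j n) :=
  inferInstanceAs (AddCommGroup (↥(ZinvC p m j n) ⧸ Submodule.comap (ZinvC p m j n).subtype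
    (Submodule.map (DC p j) (InvC p m (n+1)))))

instance (m j n : ℕ) : Module ℤ (HinvC p m j n) :=
  inferInstanceAs (Module ℤ (↥(ZinvC p m j n) ⧸ Submodule.comap (ZinvC p m j n).subtype
    (Submodule.map (DC p j) (InvC p m (n+1)))))

/-- The dual module: `ℤ`-linear functionals on chains. -/
abbrev DualC := ChC p →ₗ[ℤ] ℤ

/-- Degree-`n` cochains of `Hom_{ℤ[D_{2p}]}(C(j), ℤ)`: `D_{2p}`-equivariant functionals
(`ℤ` with the trivial action) supported on the degree-`n` cells. -/
def KcoC (m n : ℕ) : Submodule ℤ (DualC p) :=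
  (⨅ i : {i : CIdx p // ¬(validC m i ∧ degC i = n)},
      LinearMap.ker (LinearMap.applyₗ (single i.1 1)))
  ⊓ (⨅ g : DihedralGroup p, LinearMap.ker (LinearMap.lcomp ℤ ℤ (rhoC p g) - LinearMap.id))

open Classical in
/-- Projection of the total chain module onto its degree-`n` summand. -/
def projC (m n : ℕ) : ChC p →ₗ[ℤ] ChC p :=
  Finsupp.lift (ChC p) ℤ (CIdx p)
    (fun i => if validC m i ∧ degC i = n then single i 1 else 0)

/-- The coboundary taking a degree-`n` cochain `f` to the degree-`(n+1)` cochain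
`f ∘ d` (precomposition with the differential out of degree `n+1`). -/
def cobdC (m j n : ℕ) : DualC p →ₗ[ℤ] DualC p :=
  LinearMap.lcomp ℤ ℤ ((DC p j).comp (projC p m (n+1)))

/-- Degree-`n` cocycles of `Hom_{ℤ[D_{2p}]}(C(j), ℤ)`. -/
def ZcoC (m j n : ℕ) : Submodule ℤ (DualC p) := KcoC p m n ⊓ LinearMap.ker (cobdC p m j n)

/-- Degree-`n` cohomology of the cochain complex `Hom_{ℤ[D_{2p}]}(C(j), ℤ)`. -/
def HcoC (m j n : ℕ) : Type :=
  ↥(ZcoC p m j n) ⧸ Submodule.comap (ZcoC p m j n).subtype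
    (Submodule.map (cobdC p m j (n-1)) (KcoC p m (n-1)))

instance (m j n : ℕ) : AddCommGroup (HcoC p m j n) :=
  inferInstanceAs (AddCommGroup (↥(ZcoC p m j n) ⧸ Submodule.comap (ZcoC p m j n).subtype
    (Submodule.map (cobdC p m j (n-1)) (KcoC p m (n-1)))))

instance (m j n : ℕ) : Module ℤ (HcoC p m j n) :=
  inferInstanceAs (Module ℤ (↥(ZcoC p m j n) ⧸ Submodule.comap (ZcoC p m j n).subtype
    (Submodule.map (cobdC p m j (n-1)) (KcoC p m (n-1)))))


end DihedralCell

end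

namespace DihedralCell

section aux

variable {p : ℕ}

/-- A basis chain. -/
noncomputable def dl (i : CIdx p) : ChC p := single i 1

lemma single_eq_dl (i : CIdx p) (z : ℤ) : (single i z : ChC p) = z • dl i := by
  simp [dl]

lemma DC_dl (j : ℕ) (i : CIdx p) : DC p j (dl i) = bndC p j i := by
  simp [DC, dl]

lemma coe_mul_tau (g : DihedralGroup p) : ((g * tau p : DihedralGroup p) : Cos p) = (g : Cos p) := by
  rw [QuotientGroup.eq]
  have h : tau p ∈ Htau p := Subgroup.mem_zpowers _
  simpa using (Htau p).inv_mem h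

lemma mul_tau_tau (g : DihedralGroup p) : g * tau p * tau p = g := by
  simp [tau, mul_assoc]

lemma zeta_pow (n : ℕ) : zeta p ^ n = .r (n : ZMod p) := by
  simp [zeta]

lemma zeta_pow_p : zeta p ^ p = 1 := by
  rw [zeta_pow]; simp

lemma tau_zeta (n : ℕ) : tau p * zeta p ^ n = (zeta p ^ n)⁻¹ * tau p := by
  rw [zeta_pow]; simp [tau]

lemma zeta_inv (n k : ℕ) (h : p ∣ n + k) : (zeta p ^ n)⁻¹ = zeta p ^ k := by
  rw [inv_eq_iff_mul_eq_one, ← pow_add]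
  obtain ⟨c, hc⟩ := h
  rw [hc, pow_mul, zeta_pow_p, one_pow]

section sums
variable {M : Type*} [AddCommGroup M]

lemma sum_shift (j : ℕ) (f : DihedralGroup p → M) (g : DihedralGroup p) (s : ℕ) :
    ∑ i ∈ Finset.range p, f (g * zeta p ^ (j * s) * zeta p ^ (j * i))
      = ∑ i ∈ Finset.range p, f (g * zeta p ^ (j * i)) := by
  induction s with
  | zero => simp
  | succ s ih =>
    rw [← ih]
    have h1 := Finset.sum_range_succ (fun i => f (g * zeta p ^ (j * s) * zeta p ^ (j * i))) p
    have h2 := Finset.sum_range_succ' (fun i => f (g * zeta p ^ (j * s) * zeta p ^ (j * i))) p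
    rw [h1] at h2
    have h3 : zeta p ^ (j * p) = 1 := by rw [mul_comm, pow_mul, zeta_pow_p, one_pow]
    simp only [h3, mul_zero, pow_zero, add_left_inj] at h2
    rw [h2]
    refine Finset.sum_congr rfl fun i _ => ?_
    congr 1
    rw [mul_assoc, mul_assoc, ← pow_add, ← pow_add]
    congr 2; ring

/-- The norm element, split as in the complex. -/
lemma sum_norm (hodd : Odd p) (j : ℕ) (f : DihedralGroup p → M) (g : DihedralGroup p) :
    f g + ∑ t ∈ Finset.range ((p-1)/2), f (g * zeta p ^ (j * (t+1)))
      + ∑ t ∈ Finset.range ((p-1)/2), f (g * tau p * zeta p ^ (j * (t+1)) * tau p)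
      = ∑ i ∈ Finset.range p, f (g * zeta p ^ (j * i)) := by
  obtain ⟨N, hp⟩ := hodd
  have hN : (p - 1) / 2 = N := by omega
  have hr : Finset.range p = Finset.range (N + N + 1) := by congr 1; omega
  rw [hN, hr, Finset.sum_range_succ' _ (N + N), Finset.sum_range_add]
  have : ∑ t ∈ Finset.range N, f (g * tau p * zeta p ^ (j * (t+1)) * tau p)
      = ∑ x ∈ Finset.range N, f (g * zeta p ^ (j * (N + x + 1))) := by
    rw [← Finset.sum_range_reflect]
    refine Finset.sum_congr rfl fun i hi => ?_
    rw [Finset.mem_range] at hi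
    congr 1
    rw [mul_assoc g, tau_zeta, ← mul_assoc, mul_tau_tau]
    rw [zeta_inv _ (j * (N + i + 1))]
    refine ⟨j, ?_⟩
    rw [← mul_add, show N - 1 - i + 1 + (N + i + 1) = p by omega]
    ring
  rw [this]
  simp
  abel

/-- `h N = N`. -/
lemma sum_norm_shift (hodd : Odd p) (j : ℕ) (f : DihedralGroup p → M) (g : DihedralGroup p) (s : ℕ) :
    f (g * zeta p ^ (j * s))
      + ∑ t ∈ Finset.range ((p-1)/2), f (g * zeta p ^ (j * s) * zeta p ^ (j * (t+1)))
      + ∑ t ∈ Finset.range ((p-1)/2),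
          f (g * zeta p ^ (j * s) * tau p * zeta p ^ (j * (t+1)) * tau p)
    = f g + ∑ t ∈ Finset.range ((p-1)/2), f (g * zeta p ^ (j * (t+1)))
      + ∑ t ∈ Finset.range ((p-1)/2), f (g * tau p * zeta p ^ (j * (t+1)) * tau p) := by
  rw [sum_norm hodd, sum_norm hodd, sum_shift]

lemma key (hodd : Odd p) (j : ℕ) (f : DihedralGroup p → M) (g : DihedralGroup p) :
    f (g * zeta p ^ (j * ((p+1)/2)))
      + ∑ t ∈ Finset.range ((p-1)/2), f (g * zeta p ^ (j * (t+1)) * zeta p ^ (j * ((p+1)/2)))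
    = ∑ t ∈ Finset.range ((p-1)/2),
        f (g * zeta p ^ (j * (t+1)) * tau p * zeta p ^ (j * ((p+1)/2)) * tau p) + f g := by
  obtain ⟨N, rfl⟩ := hodd
  have hN : (2 * N + 1 - 1) / 2 = N := by omega
  have hN' : (2 * N + 1 + 1) / 2 = N + 1 := by omega
  rw [hN, hN']
  have hp : zeta (2 * N + 1) ^ (j * (2 * N + 1)) = 1 := by
    rw [mul_comm j, pow_mul, zeta_pow_p, one_pow]
  have h1 := Finset.sum_range_succ
    (fun i => f (g * zeta (2 * N + 1) ^ (j * (N + 1 + i)))) N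
  have h2 := Finset.sum_range_succ'
    (fun i => f (g * zeta (2 * N + 1) ^ (j * (N + 1 + i)))) N
  rw [h1] at h2
  rw [show N + 1 + N = 2 * N + 1 by ring, hp, mul_one, add_zero] at h2
  have e1 : ∀ t, g * zeta (2 * N + 1) ^ (j * (t+1)) * zeta (2 * N + 1) ^ (j * (N+1))
      = g * zeta (2 * N + 1) ^ (j * (N + 1 + (t + 1))) := by
    intro t
    rw [mul_assoc, ← pow_add]; congr 2; ring
  have e2 : ∀ t, g * zeta (2 * N + 1) ^ (j * (t+1)) * tau (2 * N + 1)
        * zeta (2 * N + 1) ^ (j * (N+1)) * tau (2 * N + 1)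
      = g * zeta (2 * N + 1) ^ (j * (N + 1 + t)) := by
    intro t
    rw [mul_assoc _ (tau _), tau_zeta, ← mul_assoc, mul_tau_tau, zeta_inv _ (j * N), mul_assoc,
      ← pow_add]
    · congr 2; ring
    · exact ⟨j, by ring⟩
  simp only [e1, e2]
  rw [h2, add_comm]

lemma key' (hodd : Odd p) (j : ℕ) (f : DihedralGroup p → M) (g : DihedralGroup p) :
    f (g * zeta p ^ (j * ((p+1)/2)) * tau p)
      + ∑ t ∈ Finset.range ((p-1)/2),
          f (g * zeta p ^ (j * (t+1)) * zeta p ^ (j * ((p+1)/2)) * tau p)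
    = ∑ t ∈ Finset.range ((p-1)/2),
        f (g * zeta p ^ (j * (t+1)) * tau p * zeta p ^ (j * ((p+1)/2))) + f (g * tau p) := by
  have := key hodd j (fun x => f (x * tau p)) g
  simpa only [mul_tau_tau] using this

end sums

section bnd
variable (j : ℕ)

lemma bnd_a0_1 (q : Cos p) : bndC p j (.a0 1 q) = 0 := by simp [bndC]
lemma bnd_b0_1 (q : Cos p) : bndC p j (.b0 1 q) = 0 := by simp [bndC]
lemma bnd_a0 (k : ℕ) (q : Cos p) :
    bndC p j (.a0 (k+2) q) = dl (.a0 (k+1) q) - dl (.b0 (k+1) q) := by simp [bndC, dl]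
lemma bnd_b0 (k : ℕ) (q : Cos p) :
    bndC p j (.b0 (k+2) q) = dl (.a0 (k+1) q) - dl (.b0 (k+1) q) := by simp [bndC, dl]
lemma bnd_c1 (g : DihedralGroup p) :
    bndC p j (.c 1 g)
      = dl (.b0 1 ↑(g * zeta p ^ (j * ((p+1)/2)))) - dl (.a0 1 (g : Cos p)) := by
  simp [bndC, dl]
lemma bnd_c (k : ℕ) (g : DihedralGroup p) :
    bndC p j (.c (k+2) g)
      = - dl (.a (k+2) (k+1) g) + (-1 : ℤ)^k • dl (.a (k+2) (k+1) (g * tau p))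
        + dl (.b (k+2) (k+1) (g * zeta p ^ (j * ((p+1)/2))))
        - (-1 : ℤ)^k • dl (.b (k+2) (k+1) (g * zeta p ^ (j * ((p+1)/2)) * tau p)) := by
  simp only [bndC, single_eq_dl, show ¬ (k + 2 ≤ 1) by omega, if_false,
    show k + 2 - 1 = k + 1 by omega, pow_succ]
  module

/-- The `c`-part of the boundary of a top cell. -/
noncomputable def cpart (k : ℕ) (g : DihedralGroup p) : ChC p :=
  - dl (.c (k+1) g) - ∑ t ∈ Finset.range ((p-1)/2), dl (.c (k+1) (g * zeta p ^ (j * (t+1))))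
   + (-1 : ℤ)^k • ∑ t ∈ Finset.range ((p-1)/2), dl (.c (k+1) (g * zeta p ^ (j * (t+1)) * tau p))

lemma bnd_a2 (g : DihedralGroup p) :
    bndC p j (.a 2 1 g) = - dl (.a0 2 (g : Cos p)) + cpart j 0 g := by
  simp [bndC, single_eq_dl, cpart]
  abel
lemma bnd_b2 (g : DihedralGroup p) :
    bndC p j (.b 2 1 g) = - dl (.b0 2 (g : Cos p)) + cpart j 0 g := by
  simp [bndC, single_eq_dl, cpart]
  abel
lemma bnd_atop (k : ℕ) (g : DihedralGroup p) :
    bndC p j (.a (k+3) (k+2) g) = - dl (.a (k+3) (k+1) g)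
      + (-1 : ℤ)^k • dl (.a (k+3) (k+1) (g * tau p)) + cpart j (k+1) g := by
  simp only [bndC, single_eq_dl, cpart, show ¬ (k + 2 = 0) by omega, if_false,
    show k + 3 - 1 = k + 2 by omega, if_true, show ¬ (k + 3 = 2) by omega,
    show k + 3 - 2 = k + 1 by omega, pow_succ, ← Finset.smul_sum]
  module
lemma bnd_btop (k : ℕ) (g : DihedralGroup p) :
    bndC p j (.b (k+3) (k+2) g) = - dl (.b (k+3) (k+1) g)
      + (-1 : ℤ)^k • dl (.b (k+3) (k+1) (g * tau p)) + cpart j (k+1) g := by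
  simp only [bndC, single_eq_dl, cpart, show ¬ (k + 2 = 0) by omega, if_false,
    show k + 3 - 1 = k + 2 by omega, if_true, show ¬ (k + 3 = 2) by omega,
    show k + 3 - 2 = k + 1 by omega, pow_succ, ← Finset.smul_sum]
  module
lemma bnd_a1 (k : ℕ) (g : DihedralGroup p) :
    bndC p j (.a (k+3) 1 g) = dl (.a (k+2) 1 g) - dl (.b (k+2) 1 g)
      + (-1 : ℤ)^k • dl (.a0 (k+3) (g : Cos p)) := by
  simp only [bndC, single_eq_dl, show ¬ (1 = 0) by omega, if_false,
    show k + 3 - 1 = k + 2 by omega, if_true, show ¬ (1 = k + 2) by omega, pow_succ]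
  module
lemma bnd_b1 (k : ℕ) (g : DihedralGroup p) :
    bndC p j (.b (k+3) 1 g) = dl (.a (k+2) 1 g) - dl (.b (k+2) 1 g)
      + (-1 : ℤ)^k • dl (.b0 (k+3) (g : Cos p)) := by
  simp only [bndC, single_eq_dl, show ¬ (1 = 0) by omega, if_false,
    show k + 3 - 1 = k + 2 by omega, if_true, show ¬ (1 = k + 2) by omega, pow_succ]
  module
/-- here `d` is `K - L - 2` -/
lemma bnd_ag (K L d : ℕ) (h : K = L + d + 3) (g : DihedralGroup p) :
    bndC p j (.a (K+1) (L+2) g) = dl (.a K (L+2) g) - dl (.b K (L+2) g)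
      + (-1 : ℤ)^d • dl (.a (K+1) (L+1) g) + (-1 : ℤ)^K • dl (.a (K+1) (L+1) (g * tau p)) := by
  have h1 : K + 1 - (L + 2) = d + 2 := by omega
  simp only [bndC, single_eq_dl, show ¬ (L + 2 = 0) by omega, if_false,
    show K + 1 - 1 = K by omega, show ¬ (L + 2 = K) by omega, show ¬ (L + 2 = 1) by omega,
    h1, show L + 2 - 1 = L + 1 by omega, pow_succ]
  module
lemma bnd_bg (K L d : ℕ) (h : K = L + d + 3) (g : DihedralGroup p) :
    bndC p j (.b (K+1) (L+2) g) = dl (.a K (L+2) g) - dl (.b K (L+2) g)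
      + (-1 : ℤ)^d • dl (.b (K+1) (L+1) g) + (-1 : ℤ)^K • dl (.b (K+1) (L+1) (g * tau p)) := by
  have h1 : K + 1 - (L + 2) = d + 2 := by omega
  simp only [bndC, single_eq_dl, show ¬ (L + 2 = 0) by omega, if_false,
    show K + 1 - 1 = K by omega, show ¬ (L + 2 = K) by omega, show ¬ (L + 2 = 1) by omega,
    h1, show L + 2 - 1 = L + 1 by omega, pow_succ]
  module

/-- boundary of the `c`-part in level 1 -/
lemma DC_cpart0 (hodd : Odd p) (g : DihedralGroup p) :
    DC p j (cpart j 0 g) = dl (.a0 1 (g : Cos p)) - dl (.b0 1 (g : Cos p)) := by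
  have hk := key hodd j (fun x => (dl (.b0 1 (x : Cos p)) : ChC p)) g
  simp only [coe_mul_tau] at hk
  simp only [cpart, map_add, map_sub, map_neg, map_smul, map_sum, DC_dl, zero_add, bnd_c1,
    Finset.sum_sub_distrib, coe_mul_tau, pow_zero, one_smul]
  rw [add_comm, ← sub_eq_zero] at hk
  rw [← sub_eq_zero, ← neg_eq_zero, ← hk]
  abel

lemma DC_cpart (hodd : Odd p) (k : ℕ) (g : DihedralGroup p) :
    DC p j (cpart j (k+1) g) = dl (.a (k+2) (k+1) g) - dl (.b (k+2) (k+1) g)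
      - (-1 : ℤ)^k • (dl (.a (k+2) (k+1) (g * tau p)) - dl (.b (k+2) (k+1) (g * tau p))) := by
  have h1 := key hodd j (fun x => (dl (.b (k+2) (k+1) x) : ChC p)) g
  have h2 := key' hodd j (fun x => (dl (.b (k+2) (k+1) x) : ChC p)) g
  simp only [cpart, map_add, map_sub, map_neg, map_smul, map_sum, DC_dl, bnd_c,
    Finset.sum_sub_distrib, Finset.sum_add_distrib, mul_tau_tau, pow_succ,
    Finset.sum_neg_distrib, ← Finset.smul_sum]
  rw [← eq_sub_iff_add_eq] at h1 h2
  simp only [h1, h2]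
  obtain h | h := neg_one_pow_eq_or ℤ k <;> rw [h] <;> module

lemma cpart_norm (hodd : Odd p) (k s : ℕ) (g : DihedralGroup p) :
    cpart j k (g * zeta p ^ (j * s))
        - (-1 : ℤ)^k • cpart j k (g * zeta p ^ (j * s) * tau p)
      = cpart j k g - (-1 : ℤ)^k • cpart j k (g * tau p) := by
  have h1 := sum_norm_shift hodd j (fun x => (dl (.c (k+1) x) : ChC p)) g s
  have h2 := sum_norm_shift hodd j (fun x => (dl (.c (k+1) (x * tau p)) : ChC p)) g s
  simp only [mul_tau_tau] at h2
  simp only [cpart]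
  rw [← sub_eq_zero] at h1 h2 ⊢
  obtain h | h := neg_one_pow_eq_or ℤ k <;> rw [h]
  · rw [show (0 : ChC p) = -0 + 0 by simp]
    nth_rw 1 [← h1]
    rw [← h2]
    module
  · rw [show (0 : ChC p) = -0 - 0 by simp]
    nth_rw 1 [← h1]
    rw [← h2]
    module

lemma DD_a0 (k : ℕ) (q : Cos p) : DC p j (bndC p j (.a0 (k+1) q)) = 0 := by
  rcases k with _ | _ | k
  · simp [bnd_a0_1]
  · simp [bnd_a0 j 0, DC_dl, bnd_a0_1, bnd_b0_1]
  · simp [bnd_a0, bnd_b0, DC_dl]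

lemma DD_b0 (k : ℕ) (q : Cos p) : DC p j (bndC p j (.b0 (k+1) q)) = 0 := by
  rcases k with _ | _ | k
  · simp [bnd_b0_1]
  · simp [bnd_b0 j 0, DC_dl, bnd_a0_1, bnd_b0_1]
  · simp [bnd_a0, bnd_b0, DC_dl]

lemma DD_c (hodd : Odd p) (k : ℕ) (g : DihedralGroup p) :
    DC p j (bndC p j (.c (k+1) g)) = 0 := by
  rcases k with _ | _ | k
  · simp [bnd_c1, DC_dl, bnd_a0_1, bnd_b0_1]
  · have h := cpart_norm j hodd 0 ((p+1)/2) g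
    simp only [bnd_c j 0, map_add, map_sub, map_neg, map_smul, DC_dl, zero_add, bnd_a2, bnd_b2,
      coe_mul_tau, pow_zero, one_smul] at h ⊢
    rw [← sub_eq_zero] at h
    rw [← h]
    abel
  · have h := cpart_norm j hodd (k+1) ((p+1)/2) g
    simp only [bnd_c j (k+1), map_add, map_sub, map_neg, map_smul, DC_dl, bnd_atop, bnd_btop,
      mul_tau_tau] at h ⊢
    rw [← sub_eq_zero] at h
    rw [← h]
    simp only [pow_succ]
    obtain h | h := neg_one_pow_eq_or ℤ k <;> rw [h] <;> module

lemma DD_a (hodd : Odd p) (L d : ℕ) (g : DihedralGroup p) :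
    DC p j (bndC p j (.a (L+d+2) (L+1) g)) = 0 := by
  rcases L with _ | L
  · rcases d with _ | _ | d
    · simp only [zero_add, bnd_a2, map_add, map_neg, DC_dl, bnd_a0 j 0, DC_cpart0 j hodd]
      abel
    · simp only [zero_add, bnd_a1 j 0, map_add, map_sub, map_smul, DC_dl, bnd_a0 j 1, bnd_a2,
        bnd_b2]
      simp
    · rw [show 0 + (d + 1 + 1) + 2 = (d + 1) + 3 by ring]
      simp only [zero_add, bnd_a1 j (d+1), map_add, map_sub, map_smul, DC_dl, bnd_a0 j (d+2),
        show d + 1 + 2 = d + 3 by ring, show d + 1 + 3 = d + 2 + 2 by ring,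
        bnd_a1 j d, bnd_b1 j d, pow_succ]
      module
  · rcases d with _ | d
    · rw [show L + 1 + 0 + 2 = L + 3 by ring]
      simp only [bnd_atop, map_add, map_sub, map_neg, map_smul, DC_dl, DC_cpart j hodd]
      rcases L with _ | L
      · simp only [zero_add, bnd_a1 j 0, coe_mul_tau]
        simp
        abel
      · rw [show L + 1 + 3 = (L + 3) + 1 by ring]
        simp only [show L + 1 + 1 = L + 2 by ring, show L + 1 + 2 = L + 3 by ring]
        simp only [bnd_ag j (L+3) L 0 (by ring), mul_tau_tau, pow_succ]
        obtain h | h := neg_one_pow_eq_or ℤ L <;> rw [h] <;> module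
    · have e : ∀ d, L + 1 + d + 2 = L + d + 3 := fun d => by ring
      rw [e, show L + (d + 1) + 3 = (L + d + 3) + 1 by ring]
      simp only [show L + 1 + 1 = L + 2 by ring]
      rw [bnd_ag j (L+d+3) L d rfl]
      simp only [map_add, map_sub, map_smul, DC_dl]
      -- difference of the `a` and `b` boundary in level `K`
      have hab : bndC p j (.a (L+d+3) (L+2) g) - bndC p j (.b (L+d+3) (L+2) g)
          = -(-1 : ℤ)^d • (dl (.a (L+d+3) (L+1) g) - dl (.b (L+d+3) (L+1) g))
            + (-1 : ℤ)^(L+d) • (dl (.a (L+d+3) (L+1) (g * tau p))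
              - dl (.b (L+d+3) (L+1) (g * tau p))) := by
        rcases d with _ | d
        · simp only [add_zero, bnd_atop, bnd_btop, pow_zero]
          module
        · rw [show L + (d + 1) + 3 = (L + d + 3) + 1 by ring]
          rw [bnd_ag j (L+d+3) L d rfl, bnd_bg j (L+d+3) L d rfl]
          simp only [pow_succ, pow_add]
          module
      rw [hab]
      rcases L with _ | L
      · simp only [zero_add, bnd_a1 j (d+1), show d + 3 + 1 = (d + 1) + 3 by ring, coe_mul_tau,
          show d + 1 + 2 = d + 3 by ring]
        simp only [pow_succ]
        obtain h | h := neg_one_pow_eq_or ℤ d <;> rw [h] <;> module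
      · simp only [show L + 1 + 1 = L + 2 by ring]
        rw [bnd_ag j (L+1+d+3) L (d+1) (by ring), bnd_ag j (L+1+d+3) L (d+1) (by ring)]
        simp only [mul_tau_tau, pow_succ, pow_add]
        obtain h | h := neg_one_pow_eq_or ℤ d <;> obtain h' | h' := neg_one_pow_eq_or ℤ L <;>
          rw [h, h'] <;> module

lemma DD_b (hodd : Odd p) (L d : ℕ) (g : DihedralGroup p) :
    DC p j (bndC p j (.b (L+d+2) (L+1) g)) = 0 := by
  rcases L with _ | L
  · rcases d with _ | _ | d
    · simp only [zero_add, bnd_b2, map_add, map_neg, DC_dl, bnd_b0 j 0, DC_cpart0 j hodd]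
      abel
    · simp only [zero_add, bnd_b1 j 0, map_add, map_sub, map_smul, DC_dl, bnd_b0 j 1, bnd_a2,
        bnd_b2]
      simp
    · rw [show 0 + (d + 1 + 1) + 2 = (d + 1) + 3 by ring]
      simp only [zero_add, bnd_b1 j (d+1), map_add, map_sub, map_smul, DC_dl, bnd_b0 j (d+2),
        show d + 1 + 2 = d + 3 by ring, show d + 1 + 3 = d + 2 + 2 by ring,
        bnd_a1 j d, bnd_b1 j d, pow_succ]
      module
  · rcases d with _ | d
    · rw [show L + 1 + 0 + 2 = L + 3 by ring]
      simp only [bnd_btop, map_add, map_sub, map_neg, map_smul, DC_dl, DC_cpart j hodd]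
      rcases L with _ | L
      · simp only [zero_add, bnd_b1 j 0, coe_mul_tau]
        simp
        abel
      · rw [show L + 1 + 3 = (L + 3) + 1 by ring]
        simp only [show L + 1 + 1 = L + 2 by ring, show L + 1 + 2 = L + 3 by ring]
        simp only [bnd_bg j (L+3) L 0 (by ring), mul_tau_tau, pow_succ]
        obtain h | h := neg_one_pow_eq_or ℤ L <;> rw [h] <;> module
    · have e : ∀ d, L + 1 + d + 2 = L + d + 3 := fun d => by ring
      rw [e, show L + (d + 1) + 3 = (L + d + 3) + 1 by ring]
      simp only [show L + 1 + 1 = L + 2 by ring]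
      rw [bnd_bg j (L+d+3) L d rfl]
      simp only [map_add, map_sub, map_smul, DC_dl]
      -- difference of the `a` and `b` boundary in level `K`
      have hab : bndC p j (.a (L+d+3) (L+2) g) - bndC p j (.b (L+d+3) (L+2) g)
          = -(-1 : ℤ)^d • (dl (.a (L+d+3) (L+1) g) - dl (.b (L+d+3) (L+1) g))
            + (-1 : ℤ)^(L+d) • (dl (.a (L+d+3) (L+1) (g * tau p))
              - dl (.b (L+d+3) (L+1) (g * tau p))) := by
        rcases d with _ | d
        · simp only [add_zero, bnd_atop, bnd_btop, pow_zero]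
          module
        · rw [show L + (d + 1) + 3 = (L + d + 3) + 1 by ring]
          rw [bnd_ag j (L+d+3) L d rfl, bnd_bg j (L+d+3) L d rfl]
          simp only [pow_succ, pow_add]
          module
      rw [hab]
      rcases L with _ | L
      · simp only [zero_add, bnd_b1 j (d+1), show d + 3 + 1 = (d + 1) + 3 by ring, coe_mul_tau,
          show d + 1 + 2 = d + 3 by ring]
        simp only [pow_succ]
        obtain h | h := neg_one_pow_eq_or ℤ d <;> rw [h] <;> module
      · simp only [show L + 1 + 1 = L + 2 by ring]
        rw [bnd_bg j (L+1+d+3) L (d+1) (by ring), bnd_bg j (L+1+d+3) L (d+1) (by ring)]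
        simp only [mul_tau_tau, pow_succ, pow_add]
        obtain h | h := neg_one_pow_eq_or ℤ d <;> obtain h' | h' := neg_one_pow_eq_or ℤ L <;>
          rw [h, h'] <;> module

lemma bnd_mem (m n : ℕ) (i : CIdx p) (hi : validC m i) (hn : degC i = n + 1) :
    bndC p j i ∈ Csub p m n := by
  have hs : ∀ (i : CIdx p) (z : ℤ), validC m i ∧ degC i = n → (single i z : ChC p) ∈ Csub p m n :=
    fun i z h => Finsupp.single_mem_supported ℤ z h
  rcases i with ⟨k, q⟩ | ⟨k, q⟩ | ⟨k, l, g⟩ | ⟨k, l, g⟩ | ⟨k, g⟩ <;>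
  simp only [validC, degC] at hi hn <;> simp only [bndC] <;> split_ifs <;>
  repeat' first
    | exact Submodule.zero_mem _
    | (refine Submodule.sum_mem _ fun t _ => ?_)
    | (refine Submodule.add_mem _ ?_ ?_)
    | (refine Submodule.sub_mem _ ?_ ?_)
    | (refine hs _ _ ?_; simp only [validC, degC]; omega)

lemma DD (hodd : Odd p) (m : ℕ) (i : CIdx p) (hi : validC m i) :
    DC p j (bndC p j i) = 0 := by
  rcases i with ⟨k, q⟩ | ⟨k, q⟩ | ⟨k, l, g⟩ | ⟨k, l, g⟩ | ⟨k, g⟩ <;> simp only [validC] at hi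
  · obtain ⟨k, rfl⟩ := Nat.exists_eq_add_of_le' hi.1
    exact DD_a0 j k q
  · obtain ⟨k, rfl⟩ := Nat.exists_eq_add_of_le' hi.1
    exact DD_b0 j k q
  · obtain ⟨l, rfl⟩ := Nat.exists_eq_add_of_le' hi.1
    obtain ⟨d, rfl⟩ : ∃ d, k = l + d + 2 := ⟨k - l - 2, by omega⟩
    exact DD_a j hodd l d g
  · obtain ⟨l, rfl⟩ := Nat.exists_eq_add_of_le' hi.1
    obtain ⟨d, rfl⟩ : ∃ d, k = l + d + 2 := ⟨k - l - 2, by omega⟩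
    exact DD_b j hodd l d g
  · obtain ⟨k, rfl⟩ := Nat.exists_eq_add_of_le' hi.1
    exact DD_c j hodd k g

end bnd

end aux

end DihedralCell

open DihedralCell in
/-- For every odd prime `p`, every `1 ≤ j ≤ p-1` and every `m ≥ 1`, the
`ℤ[D_{2p}]`-linear differential `d` of the dihedral cellular complex `C(j)` maps the
degree-`(n+1)` term into the degree-`n` term and satisfies `d ∘ d = 0`; that is, the data
define a chain complex of `ℤ[D_{2p}]`-modules. -/
theorem dihedral_cellular_is_chain_complex
    (p : ℕ) (hp : p.Prime) (hodd : Odd p)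
    (j : ℕ) (hj1 : 1 ≤ j) (hj2 : j ≤ p - 1)
    (m : ℕ) (hm : 1 ≤ m) :
    (∀ n : ℕ, ∀ x ∈ Csub p m (n+1), DC p j x ∈ Csub p m n) ∧
    (∀ n : ℕ, ∀ x ∈ Csub p m n, DC p j (DC p j x) = 0) := by
  refine ⟨fun n x hx => ?_, fun n x hx => ?_⟩
  · have hle : Csub p m (n+1) ≤ (Csub p m n).comap (DC p j) := by
      rw [Csub, Finsupp.supported_eq_span_single, Submodule.span_le]
      rintro _ ⟨i, hi, rfl⟩
      change DC p j (dl i) ∈ Csub p m n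
      rw [DC_dl]
      exact bnd_mem j m n i hi.1 hi.2
    exact hle hx
  · have hle : Csub p m n ≤ LinearMap.ker ((DC p j).comp (DC p j)) := by
      rw [Csub, Finsupp.supported_eq_span_single, Submodule.span_le]
      rintro _ ⟨i, hi, rfl⟩
      change DC p j (DC p j (dl i)) = 0
      rw [DC_dl]
      exact DD j hodd m i hi.1
    exact hle hx
end
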